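/- arXiv:2404.11853 — 9 statements merged into one kernel-verified Lean document; each statement's English description precedes it below -/
import Mathlib

section
/- The exponent sequence is strictly increasing: for every integer m ≥ 1, ξ_m < ξ_{m+1}. -/
/-!
For a power series with positive coefficients, the tail at a fixed positive argument loses a
positive term each time its starting index grows, while for a fixed starting index the tail is
nondecreasing in the positive argument. Hence a tail that starts later can only catch up with one
that starts earlier if it is evaluated at a larger argument.
-/

theorem strictAnti_tsum_nat_add {G : Type*} [AddCommGroup G] [PartialOrder G] [IsOrderedAddMonoid G]
    [TopologicalSpace G] [IsTopologicalAddGroup G] [T2Space G] {f : ℕ → G}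
    (hf : Summable f) (hpos : ∀ k, 0 < f k) : StrictAnti fun n ↦ ∑' k, f (n + k) := by
  refine strictAnti_nat_of_succ_lt fun n ↦ ?_
  have split_first : ∑' k, f (n + k) = f n + ∑' k, f (n + 1 + k) := by
    simpa only [add_zero, add_comm, add_left_comm] using
      ((summable_nat_add_iff n).2 hf).tsum_eq_zero_add
  rw [split_first]
  exact lt_add_of_pos_left _ (hpos n)

theorem exponent_strict_mono_general {a : ℕ → ℝ} (ha : ∀ k, 0 < a k) {m n : ℕ} (hmn : m < n)
    {x y : ℝ} (hx : Summable fun k ↦ a k * x ^ k) (hy : 0 < y)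
    (hxy : ∑' k, a (m + k) * x ^ (m + k) ≤ ∑' k, a (n + k) * y ^ (n + k)) : x < y := by
  by_contra! hyx
  have term_pos (k : ℕ) : 0 < a k * y ^ k := mul_pos (ha k) (pow_pos hy k)
  have term_le (k : ℕ) : a k * y ^ k ≤ a k * x ^ k :=
    mul_le_mul_of_nonneg_left (pow_le_pow_left₀ hy.le hyx k) (ha k).le
  have summable_y : Summable fun k ↦ a k * y ^ k :=
    hx.of_nonneg_of_le (fun k ↦ (term_pos k).le) term_le
  refine hxy.not_gt ?_
  calc
    ∑' k, a (n + k) * y ^ (n + k) < ∑' k, a (m + k) * y ^ (m + k) :=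
      strictAnti_tsum_nat_add summable_y term_pos hmn
    _ ≤ ∑' k, a (m + k) * x ^ (m + k) :=
      (summable_y.comp_injective (add_right_injective m)).tsum_le_tsum (fun k ↦ term_le (m + k))
        (hx.comp_injective (add_right_injective m))

/-- The exponent sequence is strictly increasing: for every integer `m ≥ 1`,
`ξ_m < ξ_{m+1}`, where `ξ_m` is the unique positive solution of
`Σ_{k=m+1}^{∞} x^k/k! = 1`. -/
theorem exponent_strict_mono (m : ℕ) (hm : 1 ≤ m) (x y : ℝ)
    (hx : 0 < x) (hxm : (∑' k : ℕ, x ^ (m + 1 + k) / (Nat.factorial (m + 1 + k) : ℝ)) = 1)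
    (hy : 0 < y)
    (hym : (∑' k : ℕ, y ^ (m + 1 + 1 + k) / (Nat.factorial (m + 1 + 1 + k) : ℝ)) = 1) :
    x < y := by
  have summable_exp := Real.summable_pow_div_factorial x
  simp only [div_eq_inv_mul] at summable_exp hxm hym
  exact exponent_strict_mono_general (a := fun k ↦ (Nat.factorial k : ℝ)⁻¹)
    (fun k ↦ by positivity) (m + 1).lt_succ_self summable_exp hy (hxm.trans hym.symm).le
end

section
/- For every integer m ≥ 1, the exponent ξ_m satisfies (m!)^{1/m} < ξ_m < ((m+1)!)^{1/(m+1)}. -/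
open Real Finset

/-!
Both bounds compare the tail of the exponential series with its first terms. The leading term
`x ^ (m + 1) / (m + 1)!` of a tail with sum `1` is less than `1`, which is the upper bound.

For the lower bound, suppose `x ^ m ≤ m !`. Since `m ! ≤ ((m + 1) / 2) ^ m`, we get
`x ≤ (m + 1) / 2`, so the leading term `x ^ m / m ! * (x / (m + 1))` of the tail is at most `1 / 2`,
and the tail is dominated by a geometric series of ratio `x / (m + 2) < 1 / 2`.
Its sum would thus be less than `1`.
-/

section

open scoped Nat

theorem two_pow_mul_factorial_le_succ_pow (n : ℕ) : 2 ^ n * n ! ≤ (n + 1) ^ n := by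
  induction n with
  | zero => simp
  | succ n ih =>
    have bernoulli : 2 * (n + 1) ^ (n + 1) ≤ (n + 1 + 1) ^ (n + 1) :=
      calc 2 * (n + 1) ^ (n + 1) = (n + 1) ^ (n + 1) + (n + 1) * (n + 1) ^ n * 1 := by ring
        _ ≤ (n + 1 + 1) ^ (n + 1) := by
          simpa using pow_add_mul_le_add_pow (Nat.zero_le (n + 1)) (Nat.zero_le _) (b := 1) (n + 1)
    calc 2 ^ (n + 1) * (n + 1)! = 2 * (n + 1) * (2 ^ n * n !) := by
          rw [Nat.factorial_succ]
          ring
      _ ≤ 2 * (n + 1) * (n + 1) ^ n := by gcongr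
      _ = 2 * (n + 1) ^ (n + 1) := by ring
      _ ≤ (n + 1 + 1) ^ (n + 1) := bernoulli

variable {x : ℝ} {n : ℕ}

theorem two_mul_le_succ_of_pow_le_factorial (hn : n ≠ 0) (h : x ^ n ≤ n !) :
    2 * x ≤ n + 1 := by
  refine le_of_pow_le_pow_left₀ hn (by positivity) ?_
  calc (2 * x) ^ n = 2 ^ n * x ^ n := mul_pow _ _ _
    _ ≤ 2 ^ n * n ! := by gcongr
    _ ≤ (n + 1) ^ n := mod_cast two_pow_mul_factorial_le_succ_pow n

theorem pow_add_div_factorial_le (hx : 0 ≤ x) (n k : ℕ) :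
    x ^ (n + k) / (n + k)! ≤ x ^ n / n ! * (x / (n + 1)) ^ k := by
  have factorial_le : (n ! * (n + 1) ^ k : ℝ) ≤ (n + k)! :=
    mod_cast Nat.factorial_mul_pow_le_factorial
  calc x ^ (n + k) / (n + k)! ≤ x ^ (n + k) / (n ! * (n + 1) ^ k) := by gcongr
    _ = x ^ n / n ! * (x / (n + 1)) ^ k := by rw [pow_add, div_pow, mul_div_mul_comm]

theorem summable_pow_add_div_factorial (x : ℝ) (n : ℕ) :
    Summable fun k : ℕ ↦ x ^ (n + k) / (n + k)! :=
  (Real.summable_pow_div_factorial x).comp_injective (add_right_injective n)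

theorem pow_div_factorial_lt_tsum (hx : 0 < x) (n : ℕ) :
    x ^ n / n ! < ∑' k : ℕ, x ^ (n + k) / (n + k)! :=
  lt_hasSum (summable_pow_add_div_factorial x n).hasSum 0 (fun _ _ ↦ by positivity) 1
    one_ne_zero (by positivity)

theorem tsum_pow_add_div_factorial_le (hx : 0 ≤ x) (hxn : x < n + 1) :
    ∑' k : ℕ, x ^ (n + k) / (n + k)! ≤ x ^ n / n ! * (1 - x / (n + 1))⁻¹ := by
  have geometric : HasSum (fun k : ℕ ↦ (x / (n + 1)) ^ k) (1 - x / (n + 1))⁻¹ :=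
    hasSum_geometric_of_lt_one (by positivity) ((div_lt_one (by positivity)).2 hxn)
  exact hasSum_le (pow_add_div_factorial_le hx n) (summable_pow_add_div_factorial x n).hasSum
    (geometric.mul_left _)

theorem tsum_pow_add_div_factorial_lt_one (hx : 0 ≤ x) (hn : n ≠ 0) (h : x ^ n ≤ n !) :
    ∑' k : ℕ, x ^ (n + 1 + k) / (n + 1 + k)! < 1 := by
  have two_mul_le : 2 * x ≤ n + 1 := two_mul_le_succ_of_pow_le_factorial hn h
  have leading_le : x ^ (n + 1) / (n + 1)! ≤ 1 / 2 :=
    calc x ^ (n + 1) / (n + 1)! ≤ x ^ n / n ! * (x / (n + 1)) := by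
          simpa using pow_add_div_factorial_le hx n 1
      _ ≤ 1 * (1 / 2) :=
          mul_le_mul ((div_le_one (by positivity)).2 h)
            ((div_le_iff₀ (by positivity)).2 (by linarith)) (by positivity) zero_le_one
      _ = 1 / 2 := one_mul _
  have ratio_lt : x / ((n + 1 : ℕ) + 1) < 1 / 2 := by
    rw [div_lt_iff₀ (by positivity)]
    push_cast
    linarith
  calc ∑' k : ℕ, x ^ (n + 1 + k) / (n + 1 + k)!
      ≤ x ^ (n + 1) / (n + 1)! * (1 - x / ((n + 1 : ℕ) + 1))⁻¹ :=
        tsum_pow_add_div_factorial_le hx (by push_cast; linarith)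
    _ ≤ 1 / 2 * (1 - x / ((n + 1 : ℕ) + 1))⁻¹ := by
        gcongr
        exact inv_nonneg.2 (by linarith)
    _ < 1 / 2 * (1 - 1 / 2)⁻¹ := by gcongr
    _ = 1 := by norm_num

end

/-- For every integer `m ≥ 1`, the exponent `ξ_m` (the unique positive
solution of `Σ_{k=m+1}^{∞} x^k/k! = 1`) satisfies
`(m!)^{1/m} < ξ_m < ((m+1)!)^{1/(m+1)}`. -/
theorem exponent_bounds (m : ℕ) (hm : 1 ≤ m) (x : ℝ) (hx : 0 < x)
    (hxm : (∑' k : ℕ, x ^ (m + 1 + k) / (Nat.factorial (m + 1 + k) : ℝ)) = 1) :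
    (Nat.factorial m : ℝ) ^ ((1 : ℝ) / m) < x ∧
      x < (Nat.factorial (m + 1) : ℝ) ^ ((1 : ℝ) / (m + 1)) := by
  have factorial_lt : (Nat.factorial m : ℝ) < x ^ m := by
    by_contra! h
    exact (tsum_pow_add_div_factorial_lt_one hx.le (Nat.ne_of_gt hm) h).ne hxm
  have lt_factorial : x ^ (m + 1) < (Nat.factorial (m + 1) : ℝ) :=
    (div_lt_one (by positivity)).1 (hxm ▸ pow_div_factorial_lt_tsum hx (m + 1))
  rw [one_div, one_div]
  constructor
  · rw [rpow_inv_lt_iff_of_pos (by positivity) hx.le (by positivity), rpow_natCast]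
    exact factorial_lt
  · rw [lt_rpow_inv_iff_of_pos hx.le (by positivity) (by positivity)]
    exact_mod_cast lt_factorial
end

section
/- The exponent sequence satisfies lim_{m → ∞} ξ_m / m = 1/e; that is, the sequence m ↦ ξ_m/m tends to 1/e as m tends to infinity. -/
open Real Finset Filter

open scoped Nat Topology

/-!
Comparing the tail `∑_{k ≥ n} x ^ k / k!` with the exponential series at `n`, whose terms dominate
by a factor of at least `(n / x) ^ n` when `x ≤ n`, bounds the tail by `(e * x / n) ^ n`; so the
tail is less than `1` until `x` reaches `n / e`. Its first term alone exceeds `1` once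
`x > (n!) ^ (1 / n)`, and `(n!) ^ (1 / n)` is asymptotic to `n / e` by Stirling's formula.
-/

/-- The tail of the exponential series at `x`, starting with the term `x ^ n / n!`. -/
noncomputable def expTail (n : ℕ) (x : ℝ) : ℝ :=
  ∑' k : ℕ, x ^ (n + k) / ((n + k)! : ℝ)

theorem summable_expTail (n : ℕ) (x : ℝ) :
    Summable fun k : ℕ => x ^ (n + k) / ((n + k)! : ℝ) :=
  (Real.summable_pow_div_factorial x).comp_injective (add_right_injective n)

theorem pow_div_factorial_le_expTail (n : ℕ) {x : ℝ} (hx : 0 ≤ x) :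
    x ^ n / (n ! : ℝ) ≤ expTail n x :=
  (summable_expTail n x).le_tsum 0 fun k _ => by positivity

theorem expTail_le_exp (n : ℕ) {x : ℝ} (hx : 0 ≤ x) : expTail n x ≤ exp x := by
  rw [Real.exp_eq_exp_ℝ, NormedSpace.exp_eq_tsum_div]
  exact tsum_comp_le_tsum_of_inj (Real.summable_pow_div_factorial x)
    (fun k => by positivity) (add_right_injective n)

theorem expTail_le_div_pow_mul_expTail (n : ℕ) {x y : ℝ} (hx : 0 ≤ x) (hxy : x ≤ y) (hy : 0 < y) :
    expTail n x ≤ (x / y) ^ n * expTail n y := by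
  have term_le (k : ℕ) : x ^ (n + k) / ((n + k)! : ℝ) ≤
      (x / y) ^ n * (y ^ (n + k) / ((n + k)! : ℝ)) :=
    calc x ^ (n + k) / ((n + k)! : ℝ) = x ^ n * x ^ k / ((n + k)! : ℝ) := by rw [pow_add]
      _ ≤ x ^ n * y ^ k / ((n + k)! : ℝ) := by gcongr
      _ = (x / y) ^ n * (y ^ (n + k) / ((n + k)! : ℝ)) := by
        rw [pow_add, div_pow]
        field_simp
  simpa only [expTail, tsum_mul_left] using
    (summable_expTail n x).tsum_le_tsum term_le ((summable_expTail n y).mul_left _)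

theorem div_exp_one_le_of_one_le_expTail {n : ℕ} {x : ℝ} (hx : 0 ≤ x) (h : 1 ≤ expTail n x) :
    n / exp 1 ≤ x := by
  by_contra! hlt
  have hn : (0 : ℝ) < n := (div_pos_iff_of_pos_right (exp_pos 1)).1 (hx.trans_lt hlt)
  have hxn : x ≤ n := hlt.le.trans (div_le_self hn.le (one_le_exp zero_le_one))
  have base_lt_one : x / n * exp 1 < 1 := by
    rwa [div_mul_eq_mul_div, div_lt_one hn, ← lt_div_iff₀ (exp_pos 1)]
  have : expTail n x < 1 :=
    calc expTail n x ≤ (x / n) ^ n * expTail n n := expTail_le_div_pow_mul_expTail n hx hxn hn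
      _ ≤ (x / n) ^ n * exp n := by gcongr; exact expTail_le_exp n hn.le
      _ = (x / n * exp 1) ^ n := by rw [mul_pow, exp_one_pow]
      _ < 1 := pow_lt_one₀ (by positivity) base_lt_one (Nat.cast_pos.1 hn).ne'
  exact this.not_ge h

theorem le_factorial_rpow_inv_of_expTail_le_one {n : ℕ} {x : ℝ} (hn : n ≠ 0) (hx : 0 ≤ x)
    (h : expTail n x ≤ 1) : x ≤ (n ! : ℝ) ^ (n : ℝ)⁻¹ := by
  have hpow : x ^ n ≤ (n ! : ℝ) :=
    (div_le_one (by positivity)).1 ((pow_div_factorial_le_expTail n hx).trans h)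
  rwa [Real.le_rpow_inv_iff_of_pos hx (by positivity) (by positivity), rpow_natCast]

theorem factorial_eq_stirlingSeq_mul {n : ℕ} (hn : n ≠ 0) :
    (n ! : ℝ) = Stirling.stirlingSeq n * √(2 * n) * (n / exp 1) ^ n := by
  rw [Stirling.stirlingSeq, mul_assoc, div_mul_cancel₀ _ (by positivity)]

theorem tendsto_sqrt_two_mul_rpow_inv :
    Tendsto (fun n : ℕ => √(2 * n) ^ (n : ℝ)⁻¹) atTop (𝓝 1) := by
  have htwo : Tendsto (fun n : ℕ => (2 * n : ℝ)) atTop atTop :=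
    tendsto_natCast_atTop_atTop.const_mul_atTop two_pos
  refine (tendsto_rpow_div.comp htwo).congr fun n => ?_
  rw [Function.comp_apply, sqrt_eq_rpow, ← rpow_mul (by positivity), ← one_div,
    div_mul_div_comm, one_mul]

theorem tendsto_stirlingSeq_rpow_inv :
    Tendsto (fun n : ℕ => Stirling.stirlingSeq n ^ (n : ℝ)⁻¹) atTop (𝓝 1) := by
  simpa only [rpow_zero] using Stirling.tendsto_stirlingSeq_sqrt_pi.rpow
    (tendsto_inv_atTop_nhds_zero_nat (𝕜 := ℝ)) (Or.inl (by positivity))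

theorem tendsto_factorial_rpow_inv_div :
    Tendsto (fun n : ℕ => (n ! : ℝ) ^ (n : ℝ)⁻¹ / n) atTop (𝓝 (1 / exp 1)) := by
  have hlim := (tendsto_stirlingSeq_rpow_inv.mul tendsto_sqrt_two_mul_rpow_inv).mul_const
    (1 / exp 1)
  rw [one_mul, one_mul] at hlim
  refine hlim.congr' ?_
  filter_upwards [eventually_ne_atTop 0] with n hn
  have stirlingSeq_nonneg : 0 ≤ Stirling.stirlingSeq n :=
    (sqrt_nonneg π).trans (Stirling.sqrt_pi_le_stirlingSeq hn)
  rw [factorial_eq_stirlingSeq_mul hn, mul_rpow (by positivity) (by positivity),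
    mul_rpow stirlingSeq_nonneg (sqrt_nonneg _), pow_rpow_inv_natCast (by positivity) hn]
  field_simp

theorem tendsto_div_of_expTail_eq_one {α : Type*} {l : Filter α} {n : α → ℕ} {x : α → ℝ}
    (hn : Tendsto n l atTop) (hx : ∀ᶠ a in l, 0 ≤ x a) (h : ∀ᶠ a in l, expTail (n a) (x a) = 1) :
    Tendsto (fun a => x a / n a) l (𝓝 (1 / exp 1)) := by
  refine tendsto_of_tendsto_of_tendsto_of_le_of_le' tendsto_const_nhds
    (tendsto_factorial_rpow_inv_div.comp hn) ?_ ?_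
  · filter_upwards [hn.eventually_ne_atTop 0, hx, h] with a hna hxa ha
    rw [le_div_iff₀ (by positivity), one_div_mul_eq_div]
    exact div_exp_one_le_of_one_le_expTail hxa ha.ge
  · filter_upwards [hn.eventually_ne_atTop 0, hx, h] with a hna hxa ha
    rw [Function.comp_apply]
    gcongr
    exact le_factorial_rpow_inv_of_expTail_le_one hna hxa ha.le

/-- The exponent sequence satisfies `lim_{m → ∞} ξ_m / m = 1/e`, where for
each `m ≥ 1`, `ξ_m` is the unique positive solution of `Σ_{k=m+1}^{∞} x^k/k! = 1`. -/
theorem exponent_div_m_tendsto (ξ : ℕ → ℝ)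
    (hpos : ∀ m : ℕ, 1 ≤ m → 0 < ξ m)
    (hξ : ∀ m : ℕ, 1 ≤ m →
      (∑' k : ℕ, (ξ m) ^ (m + 1 + k) / (Nat.factorial (m + 1 + k) : ℝ)) = 1) :
    Filter.Tendsto (fun m : ℕ => ξ m / (m : ℝ)) Filter.atTop (nhds (1 / Real.exp 1)) := by
  have hsucc : Tendsto (fun m : ℕ => ξ m / (m + 1 : ℕ)) atTop (𝓝 (1 / exp 1)) :=
    tendsto_div_of_expTail_eq_one (tendsto_add_atTop_nat 1)
      ((eventually_ge_atTop 1).mono fun m hm => (hpos m hm).le)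
      ((eventually_ge_atTop 1).mono hξ)
  have hratio : Tendsto (fun m : ℕ => (m : ℝ) / (m + 1 : ℕ)) atTop (𝓝 1) := by
    simpa only [Nat.cast_add_one] using tendsto_natCast_div_add_atTop (1 : ℝ)
  have hquot := hsucc.div hratio one_ne_zero
  rw [div_one] at hquot
  refine hquot.congr fun m => ?_
  exact div_div_div_cancel_right₀ (Nat.cast_ne_zero.2 m.succ_ne_zero) _ _
end

section
/- For all integers m ≥ 1 and k ≥ 2, the interval sum Σ_{i=k−1}^{k+m−2} e^{−ξ_m} · ξ_m^i/i! is at most Σ_{i=1}^{m} e^{−ξ_m} · ξ_m^i/i!; that is, among length-m windows of the Poisson(ξ_m) probability mass function starting at index ≥ 1, the window {1, …, m} has the largest total mass. -/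
open Real Finset

/-!
Sliding a length-`m` window from `n` to `n + 1` replaces the mass at `n` by the mass at `n + m`.
The ratio of these Poisson masses is `x ^ m / ((n + 1) ⋯ (n + m))`, which decreases in `n`, so once
it is at most `1` the window sums decrease from there on. At `n = 1` the condition reads
`x ^ m ≤ (m + 1)!`. It holds for `x = ξ_m`: the term `x ^ (m + 1) / (m + 1)!` of the defining series
is at most `1`, which suffices if `x ≥ 1`, while for `x ≤ 1` the bound is immediate.
-/

theorem antitoneOn_sum_Ico_add {M : Type*} [AddCommMonoid M] [PartialOrder M]
    [IsOrderedAddMonoid M] {f : ℕ → M} {a m : ℕ} (hf : ∀ n, a ≤ n → f (n + m) ≤ f n) :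
    AntitoneOn (fun n ↦ ∑ i ∈ Ico n (n + m), f i) (Set.Ici a) := by
  refine antitoneOn_nat_Ici_of_succ_le fun n hn ↦ ?_
  rcases m.eq_zero_or_pos with rfl | hm
  · simp
  · calc ∑ i ∈ Ico (n + 1) (n + 1 + m), f i
        = ∑ i ∈ Ico (n + 1) (n + m), f i + f (n + m) := by
          rw [Nat.add_right_comm, sum_Ico_succ_top (by omega)]
      _ ≤ ∑ i ∈ Ico (n + 1) (n + m), f i + f n := by gcongr; exact hf n hn
      _ = ∑ i ∈ Ico n (n + m), f i := by
          rw [sum_eq_sum_Ico_succ_bot (by omega : n < n + m), add_comm]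

theorem pow_div_factorial_add_le {K : Type*} [Field K] [LinearOrder K] [IsStrictOrderedRing K]
    {x : K} (hx : 0 ≤ x) {m n : ℕ} (h : x ^ m ≤ (n + 1).ascFactorial m) :
    x ^ (n + m) / (n + m).factorial ≤ x ^ n / n.factorial := by
  have hpos : (0 : K) < (n + 1).ascFactorial m := by exact_mod_cast n.ascFactorial_pos m
  calc x ^ (n + m) / (n + m).factorial
      = x ^ n / n.factorial * (x ^ m / (n + 1).ascFactorial m) := by
        rw [← Nat.factorial_mul_ascFactorial, Nat.cast_mul, pow_add, mul_div_mul_comm]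
    _ ≤ x ^ n / n.factorial :=
        mul_le_of_le_one_right (by positivity) ((div_le_one hpos).2 h)

theorem pow_le_of_pow_le_of_one_le {R : Type*} [Semiring R] [LinearOrder R]
    [IsStrictOrderedRing R] {x c : R} (hx : 0 ≤ x) (hc : 1 ≤ c) {m n : ℕ} (hmn : m ≤ n)
    (h : x ^ n ≤ c) : x ^ m ≤ c := by
  rcases le_total x 1 with hx1 | hx1
  · exact (pow_le_one₀ hx hx1).trans hc
  · exact (pow_le_pow_right₀ hx1 hmn).trans h

theorem pow_le_factorial_of_tsum_le_one {x : ℝ} (hx : 0 ≤ x) {n : ℕ}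
    (h : ∑' j : ℕ, x ^ (n + j) / (n + j).factorial ≤ 1) : x ^ n ≤ n.factorial := by
  have hsummable : Summable fun j : ℕ ↦ x ^ (n + j) / (n + j).factorial :=
    (summable_pow_div_factorial x).comp_injective (add_right_injective n)
  have hfirst : x ^ n / n.factorial ≤ 1 :=
    (hsummable.le_tsum 0 fun j _ ↦ by positivity).trans h
  rwa [div_le_one (by positivity)] at hfirst

theorem pow_le_ascFactorial_two_of_tsum_le_one {x : ℝ} (hx : 0 ≤ x) {m : ℕ}
    (h : ∑' j : ℕ, x ^ (m + 1 + j) / (m + 1 + j).factorial ≤ 1) :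
    x ^ m ≤ Nat.ascFactorial 2 m := by
  have hfactorial : Nat.ascFactorial 2 m = (m + 1).factorial := by
    simpa [add_comm] using Nat.factorial_mul_ascFactorial 1 m
  rw [hfactorial]
  exact pow_le_of_pow_le_of_one_le hx (by exact_mod_cast (m + 1).factorial_pos) m.le_succ
    (pow_le_factorial_of_tsum_le_one hx h)

theorem poisson_window_le_general {m a n : ℕ} (han : a ≤ n) {x : ℝ} (hx : 0 ≤ x)
    (hxm : x ^ m ≤ (a + 1).ascFactorial m) :
    ∑ i ∈ Ico n (n + m), exp (-x) * x ^ i / i.factorial ≤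
      ∑ i ∈ Ico a (a + m), exp (-x) * x ^ i / i.factorial := by
  have hmass (j : ℕ) (haj : a ≤ j) : x ^ (j + m) / (j + m).factorial ≤ x ^ j / j.factorial :=
    pow_div_factorial_add_le hx <| hxm.trans <|
      mod_cast Nat.ascFactorial_le m (Nat.succ_le_succ haj)
  simp only [mul_div_assoc, ← mul_sum]
  exact mul_le_mul_of_nonneg_left
    (antitoneOn_sum_Ico_add hmass Set.self_mem_Ici han han) (exp_pos _).le

/-- For all integers `m ≥ 1` and `k ≥ 2`, writing `ξ_m` for the unique
positive solution of `Σ_{j=m+1}^{∞} x^j/j! = 1`, the Poisson(ξ_m) mass of the window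
`{k−1, …, k+m−2}` is at most that of the window `{1, …, m}`. -/
theorem poisson_window_le (m k : ℕ) (hm : 1 ≤ m) (hk : 2 ≤ k) (x : ℝ) (hx : 0 < x)
    (hxm : (∑' j : ℕ, x ^ (m + 1 + j) / (Nat.factorial (m + 1 + j) : ℝ)) = 1) :
    (∑ i ∈ Finset.Icc (k - 1) (k + m - 2), Real.exp (-x) * x ^ i / (Nat.factorial i : ℝ)) ≤
      ∑ i ∈ Finset.Icc 1 m, Real.exp (-x) * x ^ i / (Nat.factorial i : ℝ) := by
  convert poisson_window_le_general (show 1 ≤ k - 1 by omega) hx.le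
    (pow_le_ascFactorial_two_of_tsum_le_one hx.le hxm.le) using 2 <;>
  (ext; simp only [mem_Icc, mem_Ico]; omega)
end

section
/- Let m ≥ 1 be an integer and let λ be a real number with 0 ≤ λ ≤ ξ_m. If N is a Poisson random variable with rate λ (i.e., P(N = k) = e^{−λ} λ^k/k! for each natural number k), then P(N ≤ m) ≥ 1 − e^{−ξ_m}. -/
open Real MeasureTheory

/-!
If `λ ≤ ξ`, then `Poisson(ξ)` is the convolution of `Poisson(λ)` with `Poisson(ξ - λ)`. Adding a
nonnegative variable can only decrease the probability of a lower set, so `P(N ≤ m)` is antitone in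
the rate and it suffices to treat `λ = ξ`. There the defining equation of `ξ` says that the tail
`P(N > m)` is exactly `e^{-ξ}`.
-/

section MeasureLemmas

open Set

theorem measure_conv_le_of_isLowerSet {M : Type*} [AddMonoid M] [Preorder M]
    [CanonicallyOrderedAdd M] [MeasurableSpace M] [MeasurableAdd₂ M] (μ ν : Measure M) [SFinite ν]
    {s : Set M} (hs : IsLowerSet s) (hs_meas : MeasurableSet s) :
    (μ ∗ ν) s ≤ μ s * ν univ :=
  calc (μ ∗ ν) s = μ.prod ν ((fun p : M × M ↦ p.1 + p.2) ⁻¹' s) :=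
        Measure.map_apply measurable_add hs_meas
    _ ≤ μ.prod ν (s ×ˢ univ) :=
        measure_mono fun p hp ↦ ⟨hs le_self_add hp, mem_univ p.2⟩
    _ = μ s * ν univ := Measure.prod_prod s univ

variable {Ω ι : Type*} [MeasurableSpace Ω] [MeasurableSpace ι] [Countable ι]
  [MeasurableSingletonClass ι] {μ : Measure Ω} {ν : Measure ι} {X : Ω → ι}

theorem measure_preimage_le_of_forall_singleton_le (h : ∀ i, μ (X ⁻¹' {i}) ≤ ν {i}) (s : Set ι) :
    μ (X ⁻¹' s) ≤ ν s :=
  calc μ (X ⁻¹' s) = μ (⋃ i ∈ s, X ⁻¹' {i}) := by rw [biUnion_preimage_singleton]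
    _ ≤ ∑' i : s, μ (X ⁻¹' {(i : ι)}) := measure_biUnion_le μ s.to_countable _
    _ ≤ ∑' i : s, ν {(i : ι)} := ENNReal.tsum_le_tsum fun i ↦ h i
    _ = ν s := tsum_measure_preimage_singleton (f := id) s.to_countable
        fun i _ ↦ measurableSet_singleton i

/- Subadditivity bounds the preimages of both `s` and `sᶜ` from above; comparing total masses
forces both bounds to be equalities, even when these preimages are not measurable. -/
theorem measure_preimage_eq_of_forall_singleton_le [IsFiniteMeasure ν]
    (h : ∀ i, μ (X ⁻¹' {i}) ≤ ν {i}) (h_univ : ν univ ≤ μ univ) (s : Set ι) :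
    μ (X ⁻¹' s) = ν s := by
  refine (measure_preimage_le_of_forall_singleton_le h s).antisymm ?_
  have h_total : ν s + ν sᶜ ≤ μ (X ⁻¹' s) + ν sᶜ :=
    calc ν s + ν sᶜ = ν univ := measure_add_measure_compl s.to_countable.measurableSet
      _ ≤ μ univ := h_univ
      _ = μ (X ⁻¹' s ∪ X ⁻¹' sᶜ) := by rw [← preimage_union, union_compl_self, preimage_univ]
      _ ≤ μ (X ⁻¹' s) + μ (X ⁻¹' sᶜ) := measure_union_le _ _
      _ ≤ μ (X ⁻¹' s) + ν sᶜ := by gcongr; exact measure_preimage_le_of_forall_singleton_le h sᶜ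
  exact (ENNReal.add_le_add_iff_right (measure_ne_top ν sᶜ)).1 h_total

end MeasureLemmas

section Poisson

open ProbabilityTheory Set
open scoped NNReal Nat

theorem poissonMeasure_antitone_of_isLowerSet {s : Set ℕ} (hs : IsLowerSet s) :
    Antitone fun r : ℝ≥0 ↦ poissonMeasure r s := fun r t hrt ↦
  calc poissonMeasure t s = (poissonMeasure r ∗ poissonMeasure (t - r)) s := by
        rw [poissonMeasure_conv_poissonMeasure, add_tsub_cancel_of_le hrt]
    _ ≤ poissonMeasure r s * poissonMeasure (t - r) univ :=
        measure_conv_le_of_isLowerSet _ _ hs .of_discrete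
    _ = poissonMeasure r s := by rw [measure_univ, mul_one]

theorem poissonMeasure_real_Ici (r : ℝ≥0) (n : ℕ) :
    (poissonMeasure r).real (Ici n) = exp (-r) * ∑' k : ℕ, (r : ℝ) ^ (n + k) / (n + k)! := by
  have h_union : Ici n = ⋃ k, {n + k} := by
    ext j
    simp [le_iff_exists_add, eq_comm]
  rw [h_union, measureReal_def, measure_iUnion (fun i j hij ↦ by simpa using hij)
    fun _ ↦ .of_discrete, ENNReal.tsum_toReal_eq fun _ ↦ measure_ne_top _ _, ← tsum_mul_left]
  exact tsum_congr fun k ↦ (poissonMeasure_real_singleton r (n + k)).trans (mul_div_assoc ..)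

theorem poissonMeasure_Iic (r : ℝ≥0) (m : ℕ) :
    poissonMeasure r (Iic m) =
      ENNReal.ofReal (1 - exp (-r) * ∑' k : ℕ, (r : ℝ) ^ (m + 1 + k) / (m + 1 + k)!) := by
  have h_compl : (Iic m)ᶜ = Ici (m + 1) := by
    rw [compl_Iic, ← Order.succ_eq_add_one, Order.Ici_succ]
  rw [← poissonMeasure_real_Ici, ← h_compl, probReal_compl_eq_one_sub .of_discrete, sub_sub_cancel,
    ofReal_measureReal]

end Poisson

/-- Let `m ≥ 1` and let `0 ≤ λ ≤ ξ_m`, where `ξ_m` is the unique positive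
solution of `Σ_{k=m+1}^{∞} x^k/k! = 1`. If `N` is a Poisson random variable with rate `λ`,
then `P(N ≤ m) ≥ 1 − e^{−ξ_m}`. -/
theorem poisson_cdf_ge (m : ℕ) (hm : 1 ≤ m) (ξ lam : ℝ) (hξpos : 0 < ξ)
    (hξ : (∑' k : ℕ, ξ ^ (m + 1 + k) / (Nat.factorial (m + 1 + k) : ℝ)) = 1)
    (hlam0 : 0 ≤ lam) (hlamξ : lam ≤ ξ)
    {Ω : Type*} [MeasurableSpace Ω] (μ : Measure Ω) [IsProbabilityMeasure μ]
    (N : Ω → ℕ)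
    (hN : ∀ k : ℕ,
      μ {ω | N ω = k} = ENNReal.ofReal (Real.exp (-lam) * lam ^ k / (Nat.factorial k : ℝ))) :
    ENNReal.ofReal (1 - Real.exp (-ξ)) ≤ μ {ω | N ω ≤ m} := by
  lift lam to NNReal using hlam0
  lift ξ to NNReal using hξpos.le
  have hN_law (k : ℕ) : μ (N ⁻¹' {k}) = ProbabilityTheory.poissonMeasure lam {k} :=
    (hN k).trans (ProbabilityTheory.poissonMeasure_singleton lam k).symm
  have h_mass : ProbabilityTheory.poissonMeasure lam Set.univ = μ Set.univ :=
    measure_univ.trans measure_univ.symm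
  calc ENNReal.ofReal (1 - Real.exp (-ξ))
      = ProbabilityTheory.poissonMeasure ξ (Set.Iic m) := by rw [poissonMeasure_Iic, hξ, mul_one]
    _ ≤ ProbabilityTheory.poissonMeasure lam (Set.Iic m) :=
        poissonMeasure_antitone_of_isLowerSet (isLowerSet_Iic m) hlamξ
    _ = μ (N ⁻¹' Set.Iic m) :=
        (measure_preimage_eq_of_forall_singleton_le (fun k ↦ (hN_law k).le) h_mass.le _).symm
end

section
/- Let n ≥ 1 and let σ be a uniformly random permutation of {1, …, n}, where σ(i) is interpreted as the value observed at position i. Let E be the event that either σ(1) = n, or the set I = {i > 1 : σ(i) > σ(1)} is nonempty and σ(min I) = n (i.e., the first value after position 1 that exceeds σ(1) is the maximum value n). Then P(E) = (1 + H_{n−1})/n, where H_0 = 0 and H_k = Σ_{t=1}^{k} 1/t is the k-th harmonic number. -/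
open Finset
open scoped Classical

/-!
Group the permutations by the value `a = σ p` at the distinguished position `p`. Exchanging two
values above `a` preserves `σ p = a` and exchanges the events that the one or the other of them
occurs first among the values above `a`. Hence each of these values, and in particular the maximum,
is first with conditional probability `1 / #(Ioi a)` given `σ p = a`. As `a` ranges over the
values below the maximum, `#(Ioi a)` ranges over `1, …, n - 1`, and the case where `a` is the
maximum contributes the remaining summand `1`.
-/

/-- `v` is the first of the values in `S` to occur in the enumeration `σ` of `α` by positions in
`ι`: it belongs to `S`, and no value of `S` has an earlier position. -/
def IsFirstValueIn {ι α : Type*} [LE ι] (σ : ι ≃ α) (S : Finset α) (v : α) : Prop :=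
  v ∈ S ∧ ∀ w ∈ S, σ.symm v ≤ σ.symm w

namespace IsFirstValueIn

variable {ι α : Type*} {σ : ι ≃ α} {S : Finset α} {v w : α}

lemma unique [PartialOrder ι] (hv : IsFirstValueIn σ S v) (hw : IsFirstValueIn σ S w) : v = w :=
  σ.symm.injective <| le_antisymm (hv.2 w hw.1) (hw.2 v hv.1)

lemma trans_swap [LE ι] [DecidableEq α] (hv : IsFirstValueIn σ S v) (hw : w ∈ S) :
    IsFirstValueIn (σ.trans (Equiv.swap v w)) S w := by
  refine ⟨hw, fun u hu => ?_⟩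
  have swap_mem : Equiv.swap v w u ∈ S := by grind [hv.1]
  simpa using hv.2 _ swap_mem

end IsFirstValueIn

section FirstValue

variable {ι α : Type*}

lemma card_filter_isFirstValueIn_le [LE ι] [DecidableEq α] {A : Finset (ι ≃ α)}
    {S : Finset α} (hA : ∀ σ ∈ A, ∀ v ∈ S, ∀ w ∈ S, σ.trans (Equiv.swap v w) ∈ A)
    {v w : α} (hv : v ∈ S) (hw : w ∈ S) :
    #{σ ∈ A | IsFirstValueIn σ S v} ≤ #{σ ∈ A | IsFirstValueIn σ S w} := by
  refine card_le_card_of_injOn (·.trans (Equiv.swap v w)) (fun σ hσ => ?_) fun σ _ τ _ h => ?_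
  · obtain ⟨hσA, hfirst⟩ := mem_filter.1 hσ
    exact mem_filter.2 ⟨hA σ hσA v hv w hw, hfirst.trans_swap hw⟩
  · exact Equiv.ext fun i => (Equiv.swap v w).injective (Equiv.congr_fun h i)

variable [LinearOrder ι]

lemma existsUnique_isFirstValueIn (σ : ι ≃ α) {S : Finset α} (hS : S.Nonempty) :
    ∃! v, IsFirstValueIn σ S v :=
  let ⟨v, hv⟩ := S.exists_min_image σ.symm hS
  ⟨v, hv, fun _ hw => IsFirstValueIn.unique hw hv⟩

lemma exists_apply_min'_eq_iff_isFirstValueIn (σ : ι ≃ α) {T : Finset ι} {S : Finset α}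
    (hT : ∀ i, i ∈ T ↔ σ i ∈ S) (v : α) :
    (∃ h : T.Nonempty, σ (T.min' h) = v) ↔ IsFirstValueIn σ S v := by
  constructor
  · rintro ⟨h, rfl⟩
    refine ⟨(hT _).1 (T.min'_mem h), fun w hw => ?_⟩
    simpa using T.min'_le (σ.symm w) ((hT _).2 (by simpa using hw))
  · rintro ⟨hv, hmin⟩
    have mem : σ.symm v ∈ T := (hT _).2 (by simpa using hv)
    refine ⟨⟨_, mem⟩, ?_⟩
    rw [← Equiv.eq_symm_apply]
    refine le_antisymm (T.min'_le _ mem) (T.le_min' _ _ fun i hi => ?_)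
    simpa using hmin (σ i) ((hT i).1 hi)

lemma card_mul_card_filter_isFirstValueIn [DecidableEq α] {A : Finset (ι ≃ α)} {S : Finset α}
    (hA : ∀ σ ∈ A, ∀ v ∈ S, ∀ w ∈ S, σ.trans (Equiv.swap v w) ∈ A) {v : α} (hv : v ∈ S) :
    #S * #{σ ∈ A | IsFirstValueIn σ S v} = #A := by
  rw [← mul_one #A]
  refine card_mul_eq_card_mul (fun w σ => IsFirstValueIn σ S w) (fun w hw => ?_) fun σ _ => ?_
  · exact (card_filter_isFirstValueIn_le hA hw hv).antisymm
      (card_filter_isFirstValueIn_le hA hv hw)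
  · obtain ⟨u, hu, huniq⟩ := existsUnique_isFirstValueIn σ ⟨v, hv⟩
    refine card_eq_one_iff_existsUnique.2 ⟨u, ?_, fun w hw => huniq w ?_⟩
    · exact (mem_bipartiteBelow _).2 ⟨hu.1, hu⟩
    · exact ((mem_bipartiteBelow _).1 hw).2

end FirstValue

lemma card_filter_equiv_apply_eq {ι α : Type*} [Fintype ι] [DecidableEq ι] [Fintype α]
    [DecidableEq α] (hcard : Fintype.card ι = Fintype.card α) (p : ι) (a : α) :
    #{σ : ι ≃ α | σ p = a} = (Fintype.card ι - 1).factorial := by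
  let restrict : {σ : ι ≃ α // σ p = a} ≃ ({i // i ≠ p} ≃ {b // b ≠ a}) :=
    (((Equiv.optionSubtypeNe p).symm.equivCongr (Equiv.refl α)).subtypeEquiv
      fun σ => by simp).trans (Equiv.optionSubtype a)
  have hcompl : Fintype.card {i // i ≠ p} = Fintype.card {b // b ≠ a} := by
    simp [Fintype.card_subtype_compl, hcard]
  rw [← Fintype.card_subtype, Fintype.card_congr restrict,
    Fintype.card_equiv (Fintype.equivOfCardEq hcompl)]
  simp [Fintype.card_subtype_compl]

lemma sum_apply_card_Ioi {α M : Type*} [Fintype α] [LinearOrder α] [LocallyFiniteOrderTop α]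
    [AddCommMonoid M] (f : ℕ → M) :
    ∑ a : α, f #(Ioi a) = ∑ k ∈ range (Fintype.card α), f k := by
  have card_lt (a : α) : #(Ioi a) < Fintype.card α := card_lt_univ_of_notMem notMem_Ioi_self
  have card_strictAnti : StrictAnti fun a : α => #(Ioi a) := fun _ _ h =>
    card_lt_card (Ioi_ssubset_Ioi h)
  have image_eq : univ.image (fun a : α => #(Ioi a)) = range (Fintype.card α) := by
    refine eq_of_subset_of_card_le (by simpa [image_subset_iff] using card_lt) ?_
    rw [card_image_of_injective _ card_strictAnti.injective, card_range, card_univ]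
  rw [← image_eq, sum_image card_strictAnti.injective.injOn]

lemma sum_inv_card_Ioi (α : Type*) [Fintype α] [LinearOrder α] [LocallyFiniteOrderTop α] :
    ∑ a : α, (#(Ioi a) : ℚ)⁻¹ = harmonic (Fintype.card α - 1) := by
  rw [sum_apply_card_Ioi fun k => (k : ℚ)⁻¹]
  cases Fintype.card α with
  | zero => simp
  | succ n =>
    -- The greatest element contributes `0⁻¹ = 0`.
    simp [sum_range_succ', harmonic]

lemma exists_apply_min'_exceeding_eq_iff_isFirstValueIn_Ioi {ι α : Type*} [Fintype ι]
    [LinearOrder ι] [LinearOrder α] [LocallyFiniteOrderTop α] (σ : ι ≃ α) {p : ι}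
    (hp : IsBot p) (v : α) :
    (∃ h : (univ.filter fun i => p < i ∧ σ p < σ i).Nonempty,
      σ ((univ.filter fun i => p < i ∧ σ p < σ i).min' h) = v) ↔
        IsFirstValueIn σ (Ioi (σ p)) v := by
  refine exists_apply_min'_eq_iff_isFirstValueIn σ (fun i => ?_) v
  have later_of_exceeding (hi : σ p < σ i) : p < i := (hp i).lt_of_ne fun h => hi.ne (h ▸ rfl)
  simpa using later_of_exceeding

section FirstExceeding

variable {ι α : Type*} [Fintype ι] [LinearOrder ι] [Fintype α]

lemma card_mul_card_filter_apply_eq_and_isFirstValueIn [DecidableEq α]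
    (hcard : Fintype.card ι = Fintype.card α) (p : ι) {a v : α} {S : Finset α} (ha : a ∉ S)
    (hv : v ∈ S) :
    #S * #{σ : ι ≃ α | σ p = a ∧ IsFirstValueIn σ S v} = (Fintype.card ι - 1).factorial := by
  rw [← card_filter_equiv_apply_eq hcard p a, ← filter_filter]
  refine card_mul_card_filter_isFirstValueIn (fun σ hσ v hv w hw => ?_) hv
  have hσp : σ p = a := by simpa using hσ
  have hav : a ≠ v := fun h => ha (h ▸ hv)
  have haw : a ≠ w := fun h => ha (h ▸ hw)
  simp [hσp, Equiv.swap_apply_of_ne_of_ne hav haw]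

variable [LinearOrder α] [LocallyFiniteOrderTop α] [OrderTop α]

lemma card_filter_apply_eq_and_isFirstValueIn_Ioi_top
    (hcard : Fintype.card ι = Fintype.card α) (p : ι) (a : α) :
    (#{σ : ι ≃ α | σ p = a ∧ IsFirstValueIn σ (Ioi a) ⊤} : ℚ) =
      (Fintype.card ι - 1).factorial * (#(Ioi a) : ℚ)⁻¹ := by
  rcases eq_or_ne a ⊤ with rfl | ha
  · -- Both sides vanish: nothing exceeds `⊤`, and `(0 : ℚ)⁻¹ = 0`.
    simp [IsFirstValueIn]
  · have top_mem : ⊤ ∈ Ioi a := mem_Ioi.2 ha.lt_top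
    have card_ne_zero : (#(Ioi a) : ℚ) ≠ 0 := by exact_mod_cast (card_pos.2 ⟨⊤, top_mem⟩).ne'
    rw [eq_mul_inv_iff_mul_eq₀ card_ne_zero, mul_comm]
    exact_mod_cast card_mul_card_filter_apply_eq_and_isFirstValueIn hcard p notMem_Ioi_self top_mem

lemma card_filter_isFirstValueIn_Ioi_apply_top (hcard : Fintype.card ι = Fintype.card α) (p : ι) :
    (#{σ : ι ≃ α | IsFirstValueIn σ (Ioi (σ p)) ⊤} : ℚ) =
      (Fintype.card ι - 1).factorial * harmonic (Fintype.card ι - 1) :=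
  calc (#{σ : ι ≃ α | IsFirstValueIn σ (Ioi (σ p)) ⊤} : ℚ)
      = ∑ a, (#{σ : ι ≃ α | IsFirstValueIn σ (Ioi (σ p)) ⊤ ∧ σ p = a} : ℚ) := by
        rw [card_eq_sum_card_fiberwise (f := fun σ : ι ≃ α => σ p) (t := univ) (by simp)]
        simp only [Nat.cast_sum, filter_filter]
    _ = ∑ a, (#{σ : ι ≃ α | σ p = a ∧ IsFirstValueIn σ (Ioi a) ⊤} : ℚ) :=
        sum_congr rfl fun a _ => congrArg _ <| congrArg card <| filter_congr fun σ _ => by grind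
    _ = (Fintype.card ι - 1).factorial * ∑ a : α, (#(Ioi a) : ℚ)⁻¹ := by
        simp only [card_filter_apply_eq_and_isFirstValueIn_Ioi_top hcard, mul_sum]
    _ = (Fintype.card ι - 1).factorial * harmonic (Fintype.card ι - 1) := by
        rw [sum_inv_card_Ioi, hcard]

theorem prob_first_exceeding_is_max_general (hcard : Fintype.card ι = Fintype.card α) (p : ι) :
    (#{σ : ι ≃ α | σ p = ⊤ ∨ IsFirstValueIn σ (Ioi (σ p)) ⊤} : ℚ) / (Fintype.card ι).factorial =
      (1 + harmonic (Fintype.card ι - 1)) / Fintype.card ι := by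
  have events_disjoint : Disjoint (univ.filter fun σ : ι ≃ α => σ p = ⊤)
      (univ.filter fun σ : ι ≃ α => IsFirstValueIn σ (Ioi (σ p)) ⊤) :=
    disjoint_filter.2 fun σ _ hp hfirst => (mem_Ioi.1 hfirst.1).ne hp
  have card_ne_zero : Fintype.card ι ≠ 0 := (Fintype.card_pos_iff.2 ⟨p⟩).ne'
  rw [filter_or, card_union_of_disjoint events_disjoint, Nat.cast_add,
    card_filter_equiv_apply_eq hcard, card_filter_isFirstValueIn_Ioi_apply_top hcard,
    ← Nat.mul_factorial_pred card_ne_zero, Nat.cast_mul]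
  field_simp

end FirstExceeding

/-- Let `σ` be a uniformly random permutation of `{1, …, n}` (here modeled
on `Fin n`, with position `⟨0⟩` first and maximum value `⟨n−1⟩`). Let `E` be the event that
either the first value is the maximum, or the first later value exceeding the first value is
the maximum. Then `P(E) = (1 + H_{n−1})/n`, where `H_k = Σ_{t=1}^{k} 1/t`. -/
theorem prob_first_exceeding_is_max (n : ℕ) (hn : 1 ≤ n) :
    ((Finset.univ.filter (fun σ : Equiv.Perm (Fin n) =>
        σ ⟨0, hn⟩ = ⟨n - 1, by omega⟩ ∨
        ∃ h : (Finset.univ.filter (fun i : Fin n => (⟨0, hn⟩ : Fin n) < i ∧ σ ⟨0, hn⟩ < σ i)).Nonempty,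
          σ ((Finset.univ.filter (fun i : Fin n => (⟨0, hn⟩ : Fin n) < i ∧ σ ⟨0, hn⟩ < σ i)).min' h)
            = ⟨n - 1, by omega⟩)).card : ℝ) / (Nat.factorial n : ℝ) =
      (1 + ∑ t ∈ Finset.Icc 1 (n - 1), (1 : ℝ) / (t : ℝ)) / (n : ℝ) := by
  obtain ⟨N, rfl⟩ := Nat.exists_eq_add_of_le' hn
  have first_isBot : IsBot (⟨0, hn⟩ : Fin (N + 1)) := Fin.zero_le
  have last_eq_top : (⟨N + 1 - 1, by omega⟩ : Fin (N + 1)) = ⊤ := rfl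
  simp only [last_eq_top, exists_apply_min'_exceeding_eq_iff_isFirstValueIn_Ioi _ first_isBot]
  simpa [harmonic_eq_sum_Icc] using congrArg (Rat.cast : ℚ → ℝ)
    (prob_first_exceeding_is_max_general (α := Fin (N + 1)) rfl ⟨0, hn⟩)
end

section
/- Let m ≥ 98 be an integer and let n be a positive integer with n ≤ 2e^{√m}. Let Z_1, …, Z_n be independent Bernoulli random variables with P(Z_i = 1) = 1/i for each i, and let M = Σ_{i=1}^{n} Z_i. Then P(M ≥ m + 2) ≤ m^{−m/5}. -/
open MeasureTheory ProbabilityTheory Finset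

/- Exponential moments at `exp t = √m`. For a `[0, 1]`-valued variable, convexity of `exp` gives
`E[exp (t X)] ≤ 1 + (exp t - 1) E[X] ≤ exp ((exp t - 1) E[X])`, so a sum with mean at most
`1 + log 2 + √m` reaches `m + 2` with probability at most
`exp ((√m - 1) (1 + log 2 + √m)) * (√m) ^ (-(m + 2))`. The first factor costs only `m` to leading
order in the exponent, while the second gains `(m + 2) / 2 * log m`; once `log m ≥ 4` this is a net
gain of at least `m / 5 * log m`. For the sum `M`, the mean is the harmonic number
`H_n ≤ 1 + log n ≤ 1 + log 2 + √m`. -/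

theorem exp_mul_le_one_add_of_mem_Icc_zero_one {x : ℝ} (hx : x ∈ Set.Icc 0 1) (t : ℝ) :
    Real.exp (t * x) ≤ 1 + (Real.exp t - 1) * x := by
  have hconv := convexOn_exp.2 (Set.mem_univ 0) (Set.mem_univ t) (sub_nonneg.2 hx.2) hx.1
    (sub_add_cancel 1 x)
  simp only [smul_eq_mul, mul_zero, zero_add, Real.exp_zero, mul_one] at hconv
  calc Real.exp (t * x) = Real.exp (x * t) := by rw [mul_comm]
    _ ≤ 1 - x + x * Real.exp t := hconv
    _ = 1 + (Real.exp t - 1) * x := by ring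

section Chernoff

variable {Ω : Type*} [MeasurableSpace Ω] {μ : Measure Ω}

theorem mgf_le_exp_mul_integral_of_mem_Icc_zero_one [IsProbabilityMeasure μ] {X : Ω → ℝ}
    (hX : AEMeasurable X μ) (hX01 : ∀ᵐ ω ∂μ, X ω ∈ Set.Icc 0 1) (t : ℝ) :
    mgf X μ t ≤ Real.exp ((Real.exp t - 1) * μ[X]) := by
  have hint : Integrable (fun ω ↦ (Real.exp t - 1) * X ω) μ :=
    (Integrable.of_mem_Icc 0 1 hX hX01).const_mul _
  calc mgf X μ t
      ≤ ∫ ω, (1 + (Real.exp t - 1) * X ω) ∂μ := by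
        refine integral_mono_ae (integrable_exp_mul_of_mem_Icc hX hX01)
          ((integrable_const 1).add hint) ?_
        filter_upwards [hX01] with ω hω using exp_mul_le_one_add_of_mem_Icc_zero_one hω t
    _ = (Real.exp t - 1) * μ[X] + 1 := by
        rw [integral_add (integrable_const 1) hint, integral_const_mul, integral_const,
          probReal_univ, one_smul, add_comm]
    _ ≤ Real.exp ((Real.exp t - 1) * μ[X]) := Real.add_one_le_exp _

variable {ι : Type*} {X : ι → Ω → ℝ} {s : Finset ι}

theorem integrable_exp_mul_sum_of_mem_Icc_zero_one [IsFiniteMeasure μ]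
    (hX : ∀ i ∈ s, AEMeasurable (X i) μ) (hX01 : ∀ i ∈ s, ∀ᵐ ω ∂μ, X i ω ∈ Set.Icc 0 1) (t : ℝ) :
    Integrable (fun ω ↦ Real.exp (t * ∑ i ∈ s, X i ω)) μ := by
  refine integrable_exp_mul_of_mem_Icc (a := 0) (b := #s) (Finset.aemeasurable_fun_sum s hX) ?_
  filter_upwards [(Filter.eventually_all_finset s).2 hX01] with ω hω
  refine ⟨sum_nonneg fun i hi ↦ (hω i hi).1, ?_⟩
  simpa only [nsmul_eq_mul, mul_one] using sum_le_card_nsmul s (X · ω) 1 fun i hi ↦ (hω i hi).2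

theorem measureReal_sum_ge_le_of_mem_Icc_zero_one (hX : ∀ i, AEMeasurable (X i) μ)
    (hindep : iIndepFun X μ) (hX01 : ∀ i ∈ s, ∀ᵐ ω ∂μ, X i ω ∈ Set.Icc 0 1) (a : ℝ) {t : ℝ}
    (ht : 0 ≤ t) :
    μ.real {ω | a ≤ ∑ i ∈ s, X i ω} ≤
      Real.exp (-t * a + (Real.exp t - 1) * ∑ i ∈ s, μ[X i]) := by
  have := hindep.isProbabilityMeasure
  calc μ.real {ω | a ≤ ∑ i ∈ s, X i ω}
      ≤ Real.exp (-t * a) * mgf (fun ω ↦ ∑ i ∈ s, X i ω) μ t :=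
        measure_ge_le_exp_mul_mgf a ht
          (integrable_exp_mul_sum_of_mem_Icc_zero_one (fun i _ ↦ hX i) hX01 t)
    _ = Real.exp (-t * a) * ∏ i ∈ s, mgf (X i) μ t := by
        rw [← hindep.mgf_sum₀ hX s, ← Finset.sum_fn]
    _ ≤ Real.exp (-t * a) * ∏ i ∈ s, Real.exp ((Real.exp t - 1) * μ[X i]) := by
        gcongr with i hi
        · exact fun _ _ ↦ mgf_nonneg
        · exact mgf_le_exp_mul_integral_of_mem_Icc_zero_one (hX i) (hX01 i hi) t
    _ = Real.exp (-t * a + (Real.exp t - 1) * ∑ i ∈ s, μ[X i]) := by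
        rw [← Real.exp_sum, ← mul_sum, ← Real.exp_add]

theorem integral_natCast_eq_measureReal_eq_one {Z : Ω → ℕ} (hZ : AEMeasurable Z μ)
    (hZ1 : ∀ᵐ ω ∂μ, Z ω ≤ 1) : ∫ ω, (Z ω : ℝ) ∂μ = μ.real {ω | Z ω = 1} := by
  have hms : NullMeasurableSet {ω | Z ω = 1} μ :=
    hZ.nullMeasurableSet_preimage (measurableSet_singleton 1)
  have hind : (fun ω ↦ (Z ω : ℝ)) =ᵐ[μ] {ω | Z ω = 1}.indicator fun _ ↦ 1 := by
    filter_upwards [hZ1] with ω hω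
    obtain h | h := Nat.le_one_iff_eq_zero_or_eq_one.1 hω <;> simp [h]
  rw [integral_congr_ae hind, integral_indicator₀ hms, setIntegral_const, smul_eq_mul, mul_one]

end Chernoff

theorem sum_one_div_succ_le_of_le_two_mul_exp {n : ℕ} {x : ℝ} (hx : 0 ≤ x)
    (hn : (n : ℝ) ≤ 2 * Real.exp x) :
    ∑ i : Fin n, 1 / ((i : ℕ) + 1 : ℝ) ≤ 1 + Real.log 2 + x := by
  have hlog : Real.log n ≤ Real.log 2 + x := by
    obtain rfl | hpos := n.eq_zero_or_pos
    · simpa only [Nat.cast_zero, Real.log_zero] using by positivity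
    · calc Real.log n ≤ Real.log (2 * Real.exp x) := Real.log_le_log (by exact_mod_cast hpos) hn
        _ = Real.log 2 + x := by
          rw [Real.log_mul two_ne_zero (Real.exp_ne_zero x), Real.log_exp]
  calc ∑ i : Fin n, 1 / ((i : ℕ) + 1 : ℝ) = harmonic n := by
        rw [Fin.sum_univ_eq_sum_range (fun i : ℕ ↦ 1 / ((i : ℝ) + 1)), harmonic]
        push_cast
        simp only [one_div]
    _ ≤ 1 + Real.log n := harmonic_le_one_add_log n
    _ ≤ 1 + Real.log 2 + x := by linarith

theorem neg_log_sqrt_mul_add_le {m : ℝ} (hm : Real.exp 4 ≤ m) :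
    -Real.log √m * (m + 2) + (√m - 1) * (1 + Real.log 2 + √m) ≤ Real.log m * (-m / 5) := by
  have hm0 : 0 < m := (Real.exp_pos 4).trans_le hm
  have hlog : 4 ≤ Real.log m := (Real.le_log_iff_exp_le hm0).2 hm
  have hsq : √m * √m = m := Real.mul_self_sqrt hm0.le
  have hsqrt : 1 ≤ √m := Real.one_le_sqrt.2 ((Real.one_le_exp (by norm_num)).trans hm)
  have hmean : (√m - 1) * (1 + Real.log 2 + √m) ≤ m + 0.7 * √m - 1.7 := by
    calc (√m - 1) * (1 + Real.log 2 + √m) ≤ (√m - 1) * (1.7 + √m) :=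
          mul_le_mul_of_nonneg_left (by linarith [Real.log_two_lt_d9]) (by linarith)
      _ = m + 0.7 * √m - 1.7 := by linear_combination hsq
  have hsqrt_le : 4 * √m ≤ m + 4 := by linarith [sq_nonneg (√m - 2)]
  have hlogm : 4 * (3 / 10 * m + 1) ≤ Real.log m * (3 / 10 * m + 1) := by gcongr
  rw [Real.log_sqrt hm0.le]
  linarith

theorem exp_four_le : Real.exp 4 ≤ 81 := by
  calc Real.exp 4 = Real.exp 1 ^ 4 := by rw [← Real.exp_nat_mul]; norm_num
    _ ≤ 3 ^ 4 := by gcongr; exact Real.exp_one_lt_three.le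
    _ = 81 := by norm_num

theorem changes_of_max_tail_bound_general {ι Ω : Type*} [MeasurableSpace Ω] {μ : Measure Ω}
    {X : ι → Ω → ℝ} {s : Finset ι} (hX : ∀ i, AEMeasurable (X i) μ) (hindep : iIndepFun X μ)
    (hX01 : ∀ i ∈ s, ∀ᵐ ω ∂μ, X i ω ∈ Set.Icc 0 1) {m : ℝ} (hm : Real.exp 4 ≤ m)
    (hmean : ∑ i ∈ s, μ[X i] ≤ 1 + Real.log 2 + √m) :
    μ {ω | m + 2 ≤ ∑ i ∈ s, X i ω} ≤ ENNReal.ofReal (m ^ (-m / 5)) := by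
  have := hindep.isProbabilityMeasure
  have hm0 : 0 < m := (Real.exp_pos 4).trans_le hm
  have hsqrt : 1 ≤ √m := Real.one_le_sqrt.2 ((Real.one_le_exp (by norm_num)).trans hm)
  refine (ENNReal.le_ofReal_iff_toReal_le (measure_ne_top _ _) (by positivity)).2 ?_
  calc μ.real {ω | m + 2 ≤ ∑ i ∈ s, X i ω}
      ≤ Real.exp (-Real.log √m * (m + 2) + (√m - 1) * ∑ i ∈ s, μ[X i]) := by
        simpa only [Real.exp_log (zero_lt_one.trans_le hsqrt)] using
          measureReal_sum_ge_le_of_mem_Icc_zero_one hX hindep hX01 (m + 2) (Real.log_nonneg hsqrt)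
    _ ≤ Real.exp (-Real.log √m * (m + 2) + (√m - 1) * (1 + Real.log 2 + √m)) := by
        gcongr
    _ ≤ Real.exp (Real.log m * (-m / 5)) := Real.exp_le_exp.2 (neg_log_sqrt_mul_add_le hm)
    _ = m ^ (-m / 5) := (Real.rpow_def_of_pos hm0 _).symm

/-- Let `m ≥ 98` and let `n ≥ 1` with `n ≤ 2e^{√m}`. Let
`Z_1, …, Z_n` be independent Bernoulli random variables with `P(Z_i = 1) = 1/i`
(here indexed by `i : Fin n`, so the `i`-th variable has success probability `1/(i+1)`),
and let `M = Σ_i Z_i`. Then `P(M ≥ m + 2) ≤ m^{−m/5}`. -/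
theorem changes_of_max_tail_bound {Ω : Type*} [MeasurableSpace Ω]
    (μ : Measure Ω) [IsProbabilityMeasure μ]
    (m n : ℕ) (hm : 98 ≤ m) (hn : 1 ≤ n)
    (hnm : (n : ℝ) ≤ 2 * Real.exp (Real.sqrt m))
    (Z : Fin n → Ω → ℕ) (hmeas : ∀ i, Measurable (Z i))
    (hindep : ProbabilityTheory.iIndepFun Z μ)
    (hval : ∀ i ω, Z i ω ≤ 1)
    (hp : ∀ i : Fin n, μ {ω | Z i ω = 1} = ENNReal.ofReal (1 / ((i : ℕ) + 1 : ℝ))) :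
    μ {ω | m + 2 ≤ ∑ i, Z i ω} ≤ ENNReal.ofReal ((m : ℝ) ^ (-(m : ℝ) / 5)) := by
  have hmean : ∑ i, ∫ ω, (Z i ω : ℝ) ∂μ ≤ 1 + Real.log 2 + √(m : ℝ) := by
    simpa only [integral_natCast_eq_measureReal_eq_one (hmeas _).aemeasurable
      (ae_of_all _ (hval _)), measureReal_def, hp,
      ENNReal.toReal_ofReal (Nat.one_div_pos_of_nat (α := ℝ)).le] using
      sum_one_div_succ_le_of_le_two_mul_exp (Real.sqrt_nonneg m) hnm
  have hm4 : Real.exp 4 ≤ m := exp_four_le.trans (by exact_mod_cast le_trans (by norm_num) hm)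
  exact_mod_cast changes_of_max_tail_bound_general (X := fun i ω ↦ (Z i ω : ℝ)) (s := univ)
    (fun i ↦ (measurable_from_top.comp (hmeas i)).aemeasurable)
    (hindep.comp (fun _ k ↦ (k : ℝ)) fun _ ↦ measurable_from_top)
    (fun i _ ↦ ae_of_all _ fun ω ↦ ⟨Nat.cast_nonneg _, by exact_mod_cast hval i ω⟩) hm4 hmean
end

section
/- There exists a natural number m₀ such that for every integer m ≥ m₀ and every integer n with n ≥ m·log m (so that p = m·log m / n ∈ (0, 1]), if Y is the sum of n independent Bernoulli random variables each with success probability p = m·log m / n, then P(Y ≤ m + 1) ≤ m^{−m/4}. -/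
open MeasureTheory ProbabilityTheory Finset

/-!
By convexity of `exp`, a `[0, 1]`-valued variable `X` satisfies
`𝔼[exp (t * X)] ≤ exp ((exp t - 1) * 𝔼[X])`, where the right-hand side is the moment generating
function of the Poisson law with the same mean. By independence the same bound holds for a sum `Y`
of such variables. If `𝔼[Y] = x * log x`, the Chernoff bound at `t = -1` gives
`ℙ(Y ≤ x + 1) ≤ exp (x + 1 - (1 - exp (-1)) * (x * log x))`; since `1 - exp (-1) > 1 / 4`, the
surplus multiple of `x * log x` eventually absorbs `x + 1`.
-/

section Chernoff

variable {Ω ι : Type*} {mΩ : MeasurableSpace Ω} {μ : Measure Ω}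

lemma exp_mul_le_one_add_of_mem_Icc {x : ℝ} (t : ℝ) (hx : x ∈ Set.Icc (0 : ℝ) 1) :
    Real.exp (t * x) ≤ 1 + (Real.exp t - 1) * x := by
  have hconv := convexOn_exp.2 (Set.mem_univ 0) (Set.mem_univ t)
    (sub_nonneg.mpr hx.2) hx.1 (sub_add_cancel 1 x)
  simp only [smul_eq_mul, mul_zero, zero_add, Real.exp_zero, mul_one] at hconv
  calc Real.exp (t * x) = Real.exp (x * t) := by rw [mul_comm]
    _ ≤ 1 - x + x * Real.exp t := hconv
    _ = 1 + (Real.exp t - 1) * x := by ring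

lemma mgf_le_exp_of_mem_Icc [IsProbabilityMeasure μ] {X : Ω → ℝ} (hX : AEMeasurable X μ)
    (hX01 : ∀ᵐ ω ∂μ, X ω ∈ Set.Icc 0 1) (t : ℝ) :
    mgf X μ t ≤ Real.exp ((Real.exp t - 1) * ∫ ω, X ω ∂μ) := by
  have hint : Integrable (fun ω ↦ (Real.exp t - 1) * X ω) μ :=
    (Integrable.of_mem_Icc 0 1 hX hX01).const_mul _
  calc mgf X μ t ≤ ∫ ω, (1 + (Real.exp t - 1) * X ω) ∂μ :=
        integral_mono_ae (integrable_exp_mul_of_mem_Icc hX hX01)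
          ((integrable_const 1).add hint)
          (hX01.mono fun ω hω ↦ exp_mul_le_one_add_of_mem_Icc t hω)
    _ = (Real.exp t - 1) * ∫ ω, X ω ∂μ + 1 := by
        rw [integral_add (integrable_const 1) hint, integral_const_mul, integral_const,
          probReal_univ, one_smul, add_comm]
    _ ≤ Real.exp ((Real.exp t - 1) * ∫ ω, X ω ∂μ) := Real.add_one_le_exp _

lemma mgf_sum_le_exp_of_mem_Icc {X : ι → Ω → ℝ} (hindep : iIndepFun X μ)
    (hX : ∀ i, AEMeasurable (X i) μ) {s : Finset ι}
    (hX01 : ∀ i ∈ s, ∀ᵐ ω ∂μ, X i ω ∈ Set.Icc 0 1) (t : ℝ) :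
    mgf (∑ i ∈ s, X i) μ t ≤ Real.exp ((Real.exp t - 1) * ∑ i ∈ s, ∫ ω, X i ω ∂μ) := by
  have := hindep.isProbabilityMeasure
  calc mgf (∑ i ∈ s, X i) μ t = ∏ i ∈ s, mgf (X i) μ t := hindep.mgf_sum₀ hX s
    _ ≤ ∏ i ∈ s, Real.exp ((Real.exp t - 1) * ∫ ω, X i ω ∂μ) :=
        prod_le_prod (fun _ _ ↦ mgf_nonneg)
          fun i hi ↦ mgf_le_exp_of_mem_Icc (hX i) (hX01 i hi) t
    _ = Real.exp ((Real.exp t - 1) * ∑ i ∈ s, ∫ ω, X i ω ∂μ) := by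
        rw [← Real.exp_sum, mul_sum]

lemma measureReal_sum_le_le_exp_of_mem_Icc {X : ι → Ω → ℝ} (hindep : iIndepFun X μ)
    (hX : ∀ i, AEMeasurable (X i) μ) {s : Finset ι}
    (hX01 : ∀ i ∈ s, ∀ᵐ ω ∂μ, X i ω ∈ Set.Icc 0 1) (a : ℝ) {t : ℝ} (ht : t ≤ 0) :
    μ.real {ω | ∑ i ∈ s, X i ω ≤ a} ≤
      Real.exp (-t * a + (Real.exp t - 1) * ∑ i ∈ s, ∫ ω, X i ω ∂μ) := by
  have := hindep.isProbabilityMeasure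
  have hsum : ∀ᵐ ω ∂μ, (∑ i ∈ s, X i) ω ∈ Set.Icc 0 (#s : ℝ) := by
    filter_upwards [(Finset.eventually_all s).mpr hX01] with ω hω
    rw [Finset.sum_apply]
    exact ⟨sum_nonneg fun i hi ↦ (hω i hi).1,
      (sum_le_card_nsmul s _ 1 fun i hi ↦ (hω i hi).2).trans_eq (by simp)⟩
  have hint : Integrable (fun ω ↦ Real.exp (t * (∑ i ∈ s, X i) ω)) μ :=
    integrable_exp_mul_of_mem_Icc (s.aemeasurable_sum fun i _ ↦ hX i) hsum
  calc μ.real {ω | ∑ i ∈ s, X i ω ≤ a}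
      ≤ Real.exp (-t * a) * mgf (∑ i ∈ s, X i) μ t := by
        simpa only [Finset.sum_apply] using measure_le_le_exp_mul_mgf a ht hint
    _ ≤ Real.exp (-t * a) * Real.exp ((Real.exp t - 1) * ∑ i ∈ s, ∫ ω, X i ω ∂μ) := by
        gcongr
        exact mgf_sum_le_exp_of_mem_Icc hindep hX hX01 t
    _ = _ := (Real.exp_add _ _).symm

lemma exp_add_one_sub_mul_log_le_rpow {x : ℝ} (hx : Real.exp 4 ≤ x) :
    Real.exp (x + 1 + (Real.exp (-1) - 1) * (x * Real.log x)) ≤ x ^ (-x / 4) := by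
  have hx0 : 0 < x := (Real.exp_pos 4).trans_le hx
  have hx5 : 5 ≤ x := by linarith [Real.add_one_le_exp 4]
  have hlog : 4 * x ≤ x * Real.log x := by
    rw [mul_comm]
    exact mul_le_mul_of_nonneg_left ((Real.le_log_iff_exp_le hx0).mpr hx) hx0.le
  have hcoeff : Real.exp (-1) - 1 ≤ -(3 / 5) := by linarith [Real.exp_neg_one_lt_d9]
  rw [Real.rpow_def_of_pos hx0, Real.exp_le_exp]
  calc x + 1 + (Real.exp (-1) - 1) * (x * Real.log x)
      ≤ x + 1 + -(3 / 5) * (x * Real.log x) := by gcongr; linarith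
    _ ≤ Real.log x * (-x / 4) := by linarith

lemma integral_natCast_eq_measureReal_of_le_one {Z : Ω → ℕ} (hZ : Measurable Z)
    (hle : ∀ ω, Z ω ≤ 1) : ∫ ω, (Z ω : ℝ) ∂μ = μ.real {ω | Z ω = 1} := by
  have hind : (fun ω ↦ (Z ω : ℝ)) = {ω | Z ω = 1}.indicator 1 := by
    ext ω
    rcases Nat.le_one_iff_eq_zero_or_eq_one.mp (hle ω) with h | h <;> simp [h]
  rw [hind]
  exact integral_indicator_one (hZ (measurableSet_singleton 1))

lemma sum_integral_natCast_eq_card_mul {Z : ι → Ω → ℕ} {s : Finset ι}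
    (hZ : ∀ i ∈ s, Measurable (Z i)) (hle : ∀ i ∈ s, ∀ ω, Z i ω ≤ 1) {p : ℝ} (hp0 : 0 ≤ p)
    (hp : ∀ i ∈ s, μ {ω | Z i ω = 1} = ENNReal.ofReal p) :
    ∑ i ∈ s, ∫ ω, (Z i ω : ℝ) ∂μ = #s * p := by
  rw [← nsmul_eq_mul]
  refine sum_eq_card_nsmul fun i hi ↦ ?_
  rw [integral_natCast_eq_measureReal_of_le_one (hZ i hi) (hle i hi), measureReal_def, hp i hi,
    ENNReal.toReal_ofReal hp0]

theorem binomial_lower_tail_bound_general {X : ι → Ω → ℝ} (hindep : iIndepFun X μ)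
    (hX : ∀ i, AEMeasurable (X i) μ) {s : Finset ι}
    (hX01 : ∀ i ∈ s, ∀ᵐ ω ∂μ, X i ω ∈ Set.Icc 0 1) {x : ℝ} (hx : Real.exp 4 ≤ x)
    (hmean : x * Real.log x ≤ ∑ i ∈ s, ∫ ω, X i ω ∂μ) :
    μ {ω | ∑ i ∈ s, X i ω ≤ x + 1} ≤ ENNReal.ofReal (x ^ (-x / 4)) := by
  have := hindep.isProbabilityMeasure
  rw [← ofReal_measureReal]
  apply ENNReal.ofReal_le_ofReal
  have hcoeff : Real.exp (-1) - 1 ≤ 0 := sub_nonpos.mpr (Real.exp_le_one_iff.mpr (by norm_num))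
  calc μ.real {ω | ∑ i ∈ s, X i ω ≤ x + 1}
      ≤ Real.exp (-(-1) * (x + 1) + (Real.exp (-1) - 1) * ∑ i ∈ s, ∫ ω, X i ω ∂μ) :=
        measureReal_sum_le_le_exp_of_mem_Icc hindep hX hX01 (x + 1) (by norm_num)
    _ ≤ Real.exp (x + 1 + (Real.exp (-1) - 1) * (x * Real.log x)) := by
        rw [neg_neg, one_mul]
        exact Real.exp_le_exp.mpr
          (add_le_add_right (mul_le_mul_of_nonpos_left hmean hcoeff) _)
    _ ≤ x ^ (-x / 4) := exp_add_one_sub_mul_log_le_rpow hx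

end Chernoff

/-- There exists `m₀` such that for every `m ≥ m₀` and every `n` with
`n ≥ m·log m` (so that `p = m·log m / n ∈ (0, 1]`), if `Y` is the sum of `n` independent
Bernoulli random variables with success probability `p`, then `P(Y ≤ m + 1) ≤ m^{−m/4}`. -/
theorem binomial_lower_tail_bound :
    ∃ m₀ : ℕ, ∀ m : ℕ, m₀ ≤ m → ∀ n : ℕ, (m : ℝ) * Real.log m ≤ (n : ℝ) →
      ∀ (Ω : Type) [MeasurableSpace Ω] (μ : Measure Ω), IsProbabilityMeasure μ →
        ∀ Z : Fin n → Ω → ℕ, (∀ i, Measurable (Z i)) →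
          ProbabilityTheory.iIndepFun Z μ →
          (∀ i ω, Z i ω ≤ 1) →
          (∀ i : Fin n,
            μ {ω | Z i ω = 1} = ENNReal.ofReal ((m : ℝ) * Real.log m / (n : ℝ))) →
          μ {ω | (∑ i, Z i ω) ≤ m + 1} ≤ ENNReal.ofReal ((m : ℝ) ^ (-(m : ℝ) / 4)) := by
  refine ⟨⌈Real.exp 4⌉₊, fun m hm n hn Ω _ μ _ Z hZ hindep hle hp ↦ ?_⟩
  have hexp : Real.exp 4 ≤ m := Nat.ceil_le.mp hm
  have hm1 : (1 : ℝ) < m := (Real.one_lt_exp_iff.mpr (by norm_num)).trans_le hexp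
  have hmlog : 0 < (m : ℝ) * Real.log m := mul_pos (zero_lt_one.trans hm1) (Real.log_pos hm1)
  have hn0 : (n : ℝ) ≠ 0 := (hmlog.trans_le hn).ne'
  have hmean : ∑ i, ∫ ω, (Z i ω : ℝ) ∂μ = m * Real.log m := by
    rw [sum_integral_natCast_eq_card_mul (fun i _ ↦ hZ i) (fun i _ ↦ hle i)
      (by positivity) (fun i _ ↦ hp i), card_fin, mul_div_cancel₀ _ hn0]
  have htail : μ {ω | ∑ i, (Z i ω : ℝ) ≤ m + 1} ≤ ENNReal.ofReal ((m : ℝ) ^ (-(m : ℝ) / 4)) :=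
    binomial_lower_tail_bound_general
      (hindep.comp (fun _ k ↦ (k : ℝ)) fun _ ↦ measurable_from_nat)
      (fun i ↦ (measurable_from_nat.comp (hZ i)).aemeasurable)
      (fun i _ ↦ ae_of_all _ fun ω ↦ ⟨Nat.cast_nonneg _, Nat.cast_le_one.mpr (hle i ω)⟩)
      hexp hmean.ge
  exact_mod_cast htail
end

section
/- For every integer m ≥ 1, setting Ψ = m!/ξ_m^m, the function f(x) = Ψ · e^{−x} · Σ_{j=0}^{m} x^j/j! − e^{−x} is strictly increasing on the interval [0, ξ_m]; consequently, for every β ∈ [0, ξ_m], f(β) ≤ (1 − e^{−ξ_m}) · Ψ − e^{−ξ_m}. -/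
open Real Finset

/-! Write `P m y = e^{-y} ∑_{j ≤ m} y^j/j!`. Differentiating the sum only drops its last term, so
the product rule leaves `P m` with derivative `-e^{-y} y^m/m!`, and `c · P m y - e^{-y}` has
derivative `e^{-y} (1 - c y^m/m!)`. This is positive for `0 < y < x` as soon as `c x^m ≤ m!`; the
largest such `c` for `x = ξ_m` is `Ψ`. At the right endpoint, `P m x` is one minus the Poisson tail
`e^{-x} ∑_{k > m} x^k/k!`, and for `x = ξ_m` this tail is `e^{-ξ_m}`. -/

/-- The probability that a Poisson variable of mean `y ≥ 0` is at most `m`, extended by the same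
formula to all real `y` so that it is differentiable everywhere. -/
noncomputable def poissonCDF (m : ℕ) (y : ℝ) : ℝ :=
  exp (-y) * ∑ j ∈ range (m + 1), y ^ j / (j.factorial : ℝ)

theorem hasDerivAt_sum_range_pow_div_factorial {𝕜 : Type*} [NontriviallyNormedField 𝕜] [CharZero 𝕜]
    (n : ℕ) (y : 𝕜) :
    HasDerivAt (fun z : 𝕜 => ∑ j ∈ range (n + 1), z ^ j / (j.factorial : 𝕜))
      (∑ j ∈ range n, y ^ j / (j.factorial : 𝕜)) y := by
  have hterm (j : ℕ) : ((j + 1 : ℕ) : 𝕜) * y ^ j / ((j + 1).factorial : 𝕜) =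
      y ^ j / (j.factorial : 𝕜) := by
    rw [Nat.factorial_succ, Nat.cast_mul,
      mul_div_mul_left _ _ (Nat.cast_ne_zero.mpr j.succ_ne_zero)]
  have hsum := HasDerivAt.fun_sum fun j (_ : j ∈ range (n + 1)) =>
    (hasDerivAt_pow j y).div_const (j.factorial : 𝕜)
  refine hsum.congr_deriv ?_
  simp [sum_range_succ', ← hterm]

theorem hasDerivAt_exp_neg (y : ℝ) : HasDerivAt (fun z : ℝ => exp (-z)) (-exp (-y)) y := by
  simpa using (hasDerivAt_neg y).exp

theorem hasDerivAt_poissonCDF (m : ℕ) (y : ℝ) :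
    HasDerivAt (poissonCDF m) (-(exp (-y) * (y ^ m / (m.factorial : ℝ)))) y := by
  refine ((hasDerivAt_exp_neg y).mul (hasDerivAt_sum_range_pow_div_factorial m y)).congr_deriv ?_
  rw [sum_range_succ]
  ring

theorem poissonCDF_eq_one_sub_tsum (m : ℕ) (y : ℝ) :
    poissonCDF m y =
      1 - exp (-y) * ∑' k : ℕ, y ^ (m + 1 + k) / ((m + 1 + k).factorial : ℝ) := by
  have hexp : ∑ j ∈ range (m + 1), y ^ j / (j.factorial : ℝ) +
      ∑' k : ℕ, y ^ (m + 1 + k) / ((m + 1 + k).factorial : ℝ) = exp y := by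
    simpa only [exp_eq_exp_ℝ, NormedSpace.exp_eq_tsum_div, add_comm (m + 1)] using
      (summable_pow_div_factorial y).sum_add_tsum_nat_add (m + 1)
  rw [poissonCDF, eq_sub_iff_add_eq, ← mul_add, hexp, ← exp_add, neg_add_cancel, exp_zero]

theorem hasDerivAt_mul_poissonCDF_sub_exp_neg (m : ℕ) (c y : ℝ) :
    HasDerivAt (fun z => c * poissonCDF m z - exp (-z))
      (exp (-y) * (1 - c * y ^ m / (m.factorial : ℝ))) y := by
  refine (((hasDerivAt_poissonCDF m y).const_mul c).sub (hasDerivAt_exp_neg y)).congr_deriv ?_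
  ring

theorem mul_pow_lt_of_mul_pow_le {R : Type*} [Semiring R] [LinearOrder R] [IsStrictOrderedRing R]
    {m : ℕ} (hm : m ≠ 0) {a c x y : R} (ha : 0 < a) (hc : c * x ^ m ≤ a)
    (hy : 0 ≤ y) (hyx : y < x) : c * y ^ m < a := by
  obtain hc_nonpos | hc_pos := le_or_gt c 0
  · exact (mul_nonpos_of_nonpos_of_nonneg hc_nonpos (pow_nonneg hy m)).trans_lt ha
  · exact (mul_lt_mul_of_pos_left (pow_lt_pow_left₀ hyx hy hm) hc_pos).trans_le hc

theorem strictMonoOn_mul_poissonCDF_sub_exp_neg {m : ℕ} (hm : m ≠ 0) {c x : ℝ}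
    (hc : c * x ^ m ≤ m.factorial) :
    StrictMonoOn (fun y => c * poissonCDF m y - exp (-y)) (Set.Icc 0 x) := by
  have hderiv := hasDerivAt_mul_poissonCDF_sub_exp_neg m c
  refine strictMonoOn_of_deriv_pos (convex_Icc 0 x)
    (fun y _ => (hderiv y).continuousAt.continuousWithinAt) fun y hy => ?_
  rw [interior_Icc] at hy
  have hfact : (0 : ℝ) < m.factorial := mod_cast m.factorial_pos
  have hlt : c * y ^ m < m.factorial := mul_pow_lt_of_mul_pow_le hm hfact hc hy.1.le hy.2
  rw [(hderiv y).deriv]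
  exact mul_pos (exp_pos _) (sub_pos.mpr ((div_lt_one hfact).mpr hlt))

theorem f_strictMonoOn_and_le_general {m : ℕ} (hm : m ≠ 0) {c x : ℝ}
    (hc : c * x ^ m ≤ m.factorial) :
    StrictMonoOn (fun y => c * poissonCDF m y - exp (-y)) (Set.Icc 0 x) ∧
    ∀ β ∈ Set.Icc 0 x, c * poissonCDF m β - exp (-β) ≤
      (1 - exp (-x) * ∑' k : ℕ, x ^ (m + 1 + k) / ((m + 1 + k).factorial : ℝ)) * c - exp (-x) := by
  have hmono := strictMonoOn_mul_poissonCDF_sub_exp_neg hm hc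
  refine ⟨hmono, fun β hβ => ?_⟩
  rw [← poissonCDF_eq_one_sub_tsum, mul_comm _ c]
  exact hmono.monotoneOn hβ (Set.right_mem_Icc.mpr (hβ.1.trans hβ.2)) hβ.2

/-- For every integer `m ≥ 1`, with `ξ_m` the unique positive solution of
`Σ_{k=m+1}^{∞} x^k/k! = 1` and `Ψ = m!/ξ_m^m`, the function
`f(x) = Ψ · e^{−x} · Σ_{j=0}^{m} x^j/j! − e^{−x}` is strictly increasing on `[0, ξ_m]`;
consequently, every `β ∈ [0, ξ_m]` satisfies `f(β) ≤ (1 − e^{−ξ_m}) · Ψ − e^{−ξ_m}`. -/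
theorem f_strictMonoOn_and_le (m : ℕ) (hm : 1 ≤ m) (x : ℝ) (hx : 0 < x)
    (hxm : (∑' k : ℕ, x ^ (m + 1 + k) / (Nat.factorial (m + 1 + k) : ℝ)) = 1) :
    StrictMonoOn
      (fun y : ℝ => ((Nat.factorial m : ℝ) / x ^ m) *
          (Real.exp (-y) * ∑ j ∈ Finset.range (m + 1), y ^ j / (Nat.factorial j : ℝ)) -
        Real.exp (-y))
      (Set.Icc (0 : ℝ) x) ∧
    ∀ β ∈ Set.Icc (0 : ℝ) x,
      ((Nat.factorial m : ℝ) / x ^ m) *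
          (Real.exp (-β) * ∑ j ∈ Finset.range (m + 1), β ^ j / (Nat.factorial j : ℝ)) -
        Real.exp (-β) ≤
      (1 - Real.exp (-x)) * ((Nat.factorial m : ℝ) / x ^ m) - Real.exp (-x) := by
  have hΨ : (m.factorial : ℝ) / x ^ m * x ^ m ≤ m.factorial :=
    (div_mul_cancel₀ _ (by positivity)).le
  simpa only [poissonCDF, hxm, mul_one] using
    f_strictMonoOn_and_le_general (Nat.one_le_iff_ne_zero.mp hm) hΨ
end
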